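/- arXiv:2510.04099 — 2 statements merged into one kernel-verified Lean document; each statement's English description precedes it below -/
import Mathlib

section
/- Let m ≥ 3 be an integer with an odd factor and let (e_1,…,e_m) be an optimal edge family of size m. For each i ∈ {1,…,m} let α_i ∈ [0, 2π) be the counterclockwise angle from e_1 to e_i, and let ψ_i ∈ (0, π] be the unique value with ψ_i ≡ α_i (mod π). Then {ψ_1, ψ_2, …, ψ_m} = {jπ/m : j = 1,…,m}; that is, the directions of the edges, taken modulo π and measured relative to e_1, are exactly the m equally spaced angles jπ/m. -/
noncomputable section

open Real
open scoped RealInnerProductSpace ENNReal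

/-- ℝ² as a Euclidean space. -/
abbrev E2 : Type := EuclideanSpace ℝ (Fin 2)

/-- The vector `(x, y)` in ℝ². -/
def vec2 (x y : ℝ) : E2 := (WithLp.equiv 2 (Fin 2 → ℝ)).symm ![x, y]

/-- The coordinates of a vector in ℝ². -/
def toFun2 (v : E2) : Fin 2 → ℝ := WithLp.equiv 2 (Fin 2 → ℝ) v

/-- The phaseless measurement map `Φ_A(x) = (|⟨a_j, x⟩|)_j`. -/
def PhiMap {m : ℕ} (a : Fin m → E2) (x : E2) : EuclideanSpace ℝ (Fin m) :=
  (WithLp.equiv 2 (Fin m → ℝ)).symm fun j => |⟪a j, x⟫|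

/-- The distance `dist(x,y) = min ‖x − y‖ ‖x + y‖` (real phase retrieval distance). -/
def pdist (x y : E2) : ℝ := min ‖x - y‖ ‖x + y‖

/-- The set of Lipschitz ratios of the phaseless measurement map. -/
def ratioSet {m : ℕ} (a : Fin m → E2) : Set ℝ :=
  {r | ∃ x y : E2, pdist x y ≠ 0 ∧ r = ‖PhiMap a x - PhiMap a y‖ / pdist x y}

/-- The optimal lower Lipschitz constant `L_A`. -/
def lipL {m : ℕ} (a : Fin m → E2) : ℝ := sInf (ratioSet a)

/-- The optimal upper Lipschitz constant `U_A`. -/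
def lipU {m : ℕ} (a : Fin m → E2) : ℝ := sSup (ratioSet a)

/-- The condition number `β_A = U_A / L_A`, with `β_A = +∞` when `L_A = 0`. -/
def condNum {m : ℕ} (a : Fin m → E2) : ℝ≥0∞ :=
  if lipL a = 0 then ⊤ else ENNReal.ofReal (lipU a / lipL a)

/-- An edge family: nonzero vectors with pairwise distinct directions summing to zero
(the edge vectors of a strictly convex polygon). -/
def IsEdgeFamily {m : ℕ} (e : Fin m → E2) : Prop :=
  (∀ j, e j ≠ 0) ∧
  (∀ i j : Fin m, i ≠ j → ‖e i‖⁻¹ • e i ≠ ‖e j‖⁻¹ • e j) ∧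
  ∑ j, e j = 0

/-- The diameter-to-perimeter ratio of the polygon with edge vectors `e`. -/
def rRatio {m : ℕ} (e : Fin m → E2) : ℝ :=
  sSup {s | ∃ u : E2, ‖u‖ = 1 ∧ s = ∑ j, |⟪e j, u⟫|} / (2 * ∑ j, ‖e j‖)

/-- An optimal edge family: minimizes `rRatio` among all edge families of size `m`. -/
def IsOptimalEdgeFamily {m : ℕ} (e : Fin m → E2) : Prop :=
  IsEdgeFamily e ∧ ∀ e' : Fin m → E2, IsEdgeFamily e' → rRatio e ≤ rRatio e'

/-- The complex square map on ℝ² ≅ ℂ: `f(t·(cos φ, sin φ)) = t²·(cos 2φ, sin 2φ)`. -/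
def csq (v : E2) : E2 :=
  vec2 (toFun2 v 0 ^ 2 - toFun2 v 1 ^ 2) (2 * toFun2 v 0 * toFun2 v 1)

/-- The harmonic frame `E_m`: the `j`-th row is `(cos((j−1)π/m), sin((j−1)π/m))`, `j = 1,…,m`. -/
def harmonicFrame (m : ℕ) : Fin m → E2 :=
  fun j => vec2 (Real.cos ((j : ℕ) * π / m)) (Real.sin ((j : ℕ) * π / m))


/-- Rotation of a vector in ℝ² by angle `θ`. -/
def rot (θ : ℝ) (v : E2) : E2 :=
  vec2 (Real.cos θ * toFun2 v 0 - Real.sin θ * toFun2 v 1)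
    (Real.sin θ * toFun2 v 0 + Real.cos θ * toFun2 v 1)


/-- Antiderivative of `|sin (x - ψ)|` on `[0, π]`. -/
def antiF (ψ x : ℝ) : ℝ := if x ≤ ψ then Real.cos (ψ - x) else 2 - Real.cos (x - ψ)

lemma antiF_diff {ψ a b : ℝ} (h0 : 0 < ψ) (hp : ψ ≤ π) (ha : 0 ≤ a) (hab : a ≤ b) (hb : b ≤ π)
    (h : b ≤ ψ ∨ ψ ≤ a) :
    antiF ψ b - antiF ψ a = 2 * Real.sin ((b - a) / 2) * |Real.sin ((a + b) / 2 - ψ)| := by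
  rcases h with h | h
  · have h1 : Real.sin ((a + b) / 2 - ψ) = - Real.sin (ψ - (a + b) / 2) := by
      rw [← Real.sin_neg]; congr 1; ring
    have h2 : 0 ≤ Real.sin (ψ - (a + b) / 2) :=
      Real.sin_nonneg_of_nonneg_of_le_pi (by linarith) (by linarith)
    rw [h1, abs_neg, abs_of_nonneg h2, antiF, antiF, if_pos h, if_pos (hab.trans h),
      Real.cos_sub_cos]
    have e1 : (ψ - b + (ψ - a)) / 2 = ψ - (a + b) / 2 := by ring
    have e2 : (ψ - b - (ψ - a)) / 2 = -((b - a) / 2) := by ring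
    rw [e1, e2, Real.sin_neg]; ring
  · have h2 : 0 ≤ Real.sin ((a + b) / 2 - ψ) :=
      Real.sin_nonneg_of_nonneg_of_le_pi (by linarith) (by linarith)
    have key : ∀ x, ψ ≤ x → antiF ψ x = 2 - Real.cos (x - ψ) := by
      intro x hx
      unfold antiF
      split_ifs with hh
      · have : x = ψ := le_antisymm hh hx
        subst this; norm_num
      · rfl
    rw [abs_of_nonneg h2, key b (h.trans hab), key a h]
    have : 2 - Real.cos (b - ψ) - (2 - Real.cos (a - ψ)) = Real.cos (a - ψ) - Real.cos (b - ψ) := by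
      ring
    rw [this, Real.cos_sub_cos]
    have e1 : (a - ψ + (b - ψ)) / 2 = (a + b) / 2 - ψ := by ring
    have e2 : (a - ψ - (b - ψ)) / 2 = -((b - a) / 2) := by ring
    rw [e1, e2, Real.sin_neg]; ring

lemma antiF_total {ψ : ℝ} (h0 : 0 < ψ) (hp : ψ ≤ π) : antiF ψ π - antiF ψ 0 = 2 := by
  have h1 : antiF ψ 0 = Real.cos ψ := by simp [antiF, h0.le]
  have h2 : antiF ψ π = 2 + Real.cos ψ := by
    unfold antiF
    split_ifs with h
    · have : ψ = π := le_antisymm hp h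
      subst this; norm_num
    · rw [Real.cos_pi_sub]; ring
  rw [h1, h2]; ring

/-- The analytic core: extremal case forces equal spacing. -/
lemma spacing {m : ℕ} (hm : 0 < m) (l ψ : Fin m → ℝ) (hl : ∀ j, 0 < l j)
    (hψ : ∀ j, 0 < ψ j ∧ ψ j ≤ π) (hpi : ∃ j, ψ j = π) (M : ℝ)
    (hM : ∀ θ, ∑ j, l j * |Real.sin (θ - ψ j)| ≤ M)
    (hL : M * (m * Real.sin (π / (2 * m))) ≤ ∑ j, l j) :
    Set.range ψ = Set.range (fun j : Fin m => ((j : ℕ) + 1) * π / m) := by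
  have hm0 : (0 : ℝ) < m := by exact_mod_cast hm
  set σ := Tuple.sort ψ with hσ
  have hmono : Monotone (ψ ∘ σ) := Tuple.monotone_sort ψ
  let a : ℕ → ℝ := fun k => if k = 0 then 0 else if h : k - 1 < m then ψ (σ ⟨k - 1, h⟩) else π
  have a0 : a 0 = 0 := by simp [a]
  have aS : ∀ (k : ℕ) (h : k < m), a (k + 1) = ψ (σ ⟨k, h⟩) := by
    intro k h; simp [a, h]
  have am : a m = π := by
    obtain ⟨k, rfl⟩ : ∃ k, m = k + 1 := ⟨m - 1, by omega⟩
    rw [aS k (by omega)]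
    obtain ⟨j, hj⟩ := hpi
    refine le_antisymm (hψ _).2 ?_
    have h1 := hmono (show σ.symm j ≤ ⟨k, by omega⟩ from Fin.le_def.2 (by
      have := (σ.symm j).2; simp; omega))
    simp only [Function.comp, Equiv.apply_symm_apply, hj] at h1
    exact h1
  have astep : ∀ k, k < m → a k ≤ a (k + 1) := by
    intro k hk
    rw [aS k hk]
    rcases k with _ | k
    · rw [a0]; exact (hψ _).1.le
    · rw [aS k (by omega)]
      exact hmono (Fin.le_def.2 (by simp))
  have anon : ∀ k, k ≤ m → 0 ≤ a k := by
    intro k hk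
    rcases k with _ | k
    · rw [a0]
    · rw [aS k (by omega)]; exact (hψ _).1.le
  have ale : ∀ k, k ≤ m → a k ≤ π := by
    intro k hk
    rcases k with _ | k
    · rw [a0]; exact Real.pi_pos.le
    · rw [aS k (by omega)]; exact (hψ _).2
  have asep : ∀ k, k < m → ∀ j, a (k + 1) ≤ ψ j ∨ ψ j ≤ a k := by
    intro k hk j
    obtain ⟨i, rfl⟩ := σ.surjective j
    rw [aS k hk]
    by_cases h : k ≤ i.1
    · left; exact hmono (Fin.le_def.2 h)
    · right
      rcases k with _ | k
      · omega
      · rw [aS k (by omega)]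
        exact hmono (Fin.le_def.2 (by simp; omega))
  have tot : ∑ k ∈ Finset.range m, 2 * Real.sin ((a (k+1) - a k) / 2) *
      (∑ j, l j * |Real.sin ((a k + a (k+1)) / 2 - ψ j)|) = 2 * ∑ j, l j := by
    have : ∀ j, ∑ k ∈ Finset.range m, (antiF (ψ j) (a (k+1)) - antiF (ψ j) (a k)) = 2 := by
      intro j
      rw [Finset.sum_range_sub (fun k => antiF (ψ j) (a k)), a0, am]
      exact antiF_total (hψ j).1 (hψ j).2
    rw [Finset.mul_sum]
    simp_rw [Finset.mul_sum]
    rw [Finset.sum_comm]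
    refine Finset.sum_congr rfl fun j _ => ?_
    rw [show 2 * l j = (∑ k ∈ Finset.range m, (antiF (ψ j) (a (k+1)) - antiF (ψ j) (a k))) * l j
      by rw [this j], Finset.sum_mul]
    refine Finset.sum_congr rfl fun k hk => ?_
    have hk' := Finset.mem_range.1 hk
    rw [antiF_diff (hψ j).1 (hψ j).2 (anon k hk'.le) (astep k hk') (ale _ hk') (asep k hk' j)]
    ring
  have hsn : ∀ k, k < m → 0 ≤ Real.sin ((a (k+1) - a k) / 2) := by
    intro k hk
    have := astep k hk
    have := anon k hk.le
    have := ale (k+1) hk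
    exact Real.sin_nonneg_of_nonneg_of_le_pi (by linarith) (by linarith)
  have ub : 2 * ∑ j, l j ≤ 2 * M * ∑ k ∈ Finset.range m, Real.sin ((a (k+1) - a k) / 2) := by
    rw [← tot, Finset.mul_sum]
    refine Finset.sum_le_sum fun k hk => ?_
    have := mul_le_mul_of_nonneg_left (hM ((a k + a (k+1)) / 2)) (hsn k (Finset.mem_range.1 hk))
    nlinarith
  have hLpos : 0 < ∑ j, l j := by
    have : Nonempty (Fin m) := ⟨⟨0, hm⟩⟩
    exact Finset.sum_pos (fun j _ => hl j) Finset.univ_nonempty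
  have hMpos : 0 < M := by
    have h0 : 0 ≤ ∑ k ∈ Finset.range m, Real.sin ((a (k+1) - a k) / 2) :=
      Finset.sum_nonneg fun k hk => hsn k (Finset.mem_range.1 hk)
    by_contra hcon
    push Not at hcon
    nlinarith [mul_nonneg (neg_nonneg.2 hcon) h0]
  have hge : m * Real.sin (π / (2 * m)) ≤
      ∑ k ∈ Finset.range m, Real.sin ((a (k+1) - a k) / 2) := by
    refine le_of_mul_le_mul_left ?_ hMpos
    linarith
  have hw : ∑ k ∈ Finset.range m, (1 / (m:ℝ)) = 1 := by
    simp; field_simp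
  have hcenter : ∑ k ∈ Finset.range m, (1 / (m:ℝ)) • ((a (k+1) - a k) / 2) = π / (2 * m) := by
    simp only [smul_eq_mul]
    rw [← Finset.mul_sum, ← Finset.sum_div, Finset.sum_range_sub, a0, am]
    field_simp; ring
  have hmem : ∀ k ∈ Finset.range m, (a (k+1) - a k) / 2 ∈ Set.Icc 0 π := by
    intro k hk
    have hk := Finset.mem_range.1 hk
    have := astep k hk
    have := anon k hk.le
    have := ale (k+1) hk
    constructor <;> linarith
  have heq := strictConcaveOn_sin_Icc.eq_of_map_sum_eq (t := Finset.range m)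
    (w := fun _ => 1 / (m:ℝ)) (p := fun k => (a (k+1) - a k) / 2)
    (fun k _ => by positivity) hw hmem (by
      rw [hcenter]
      simp only [smul_eq_mul]
      rw [← Finset.mul_sum, one_div, ← div_eq_inv_mul, le_div_iff₀ hm0]
      linarith)
  have hconst : ∀ k, k < m → a (k+1) - a k = π / m := by
    intro k hk
    have h1 : ∀ i ∈ Finset.range m, (1 / (m:ℝ)) • ((a (i+1) - a i) / 2) =
        (1 / (m:ℝ)) • ((a (k+1) - a k) / 2) := fun i hi => by
      rw [heq hi (Finset.mem_range.2 hk)]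
    rw [Finset.sum_congr rfl h1] at hcenter
    simp only [smul_eq_mul, Finset.sum_const, Finset.card_range, nsmul_eq_mul] at hcenter
    field_simp at hcenter ⊢
    linarith
  have aval : ∀ k, k ≤ m → a k = k * π / m := by
    intro k
    induction k with
    | zero => intro _; rw [a0]; simp
    | succ k ih =>
      intro hk
      have h1 := ih (by omega)
      have h2 := hconst k (by omega)
      have : a (k+1) = a k + π / m := by linarith
      rw [this, h1]; push_cast; ring
  have hfun : ψ ∘ σ = fun j : Fin m => ((j : ℕ) + 1) * π / m := by
    funext i
    have h1 := aS i.1 i.2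
    have h2 := aval (i.1 + 1) i.2
    rw [h1] at h2
    simp only [Function.comp]
    rw [h2]; push_cast; rfl
  rw [← hfun, Set.range_comp, σ.surjective.range_eq, Set.image_univ]

lemma sum_abs_sin_le {m : ℕ} (hm : 0 < m) (θ : ℝ) :
    (∑ j ∈ Finset.range m, |Real.sin (θ + j * π / m)|) * Real.sin (π / (2 * m)) ≤ 1 := by
  have hm0 : (0 : ℝ) < m := by exact_mod_cast hm
  have hper : Function.Periodic
      (fun θ => ∑ j ∈ Finset.range m, |Real.sin (θ + j * π / m)|) (π / m) := by
    intro θ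
    have h1 := Finset.sum_range_succ (fun j : ℕ => |Real.sin (θ + j * π / m)|) m
    have h2 := Finset.sum_range_succ' (fun j : ℕ => |Real.sin (θ + j * π / m)|) m
    have h3 : |Real.sin (θ + m * π / m)| = |Real.sin (θ + (0:ℕ) * π / m)| := by
      have : θ + m * π / m = θ + π := by field_simp
      rw [this, Real.sin_add_pi, abs_neg]; simp
    have h4 : ∑ j ∈ Finset.range m, |Real.sin (θ + π / m + j * π / m)| =
        ∑ j ∈ Finset.range m, |Real.sin (θ + (j + 1 : ℕ) * π / m)| := by
      refine Finset.sum_congr rfl fun j _ => ?_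
      congr 2; push_cast; ring
    show ∑ j ∈ Finset.range m, |Real.sin (θ + π / m + j * π / m)| = _
    rw [h4]; linarith
  obtain ⟨t, ht, hteq⟩ := hper.exists_mem_Ico₀ (by positivity) θ
  rw [hteq]
  have hpos : ∀ j ∈ Finset.range m, |Real.sin (t + j * π / m)| = Real.sin (t + j * π / m) := by
    intro j hj
    apply abs_of_nonneg
    have hj' : (j:ℝ) + 1 ≤ m := by exact_mod_cast Finset.mem_range.1 hj
    have h1 : t + j * π / m ≤ π := by
      have : π / m + j * π / m ≤ π := by
        rw [← add_div, div_le_iff₀ hm0]; nlinarith [Real.pi_pos]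
      linarith [ht.2]
    exact Real.sin_nonneg_of_nonneg_of_le_pi (add_nonneg ht.1 (by positivity)) h1
  rw [Finset.sum_congr rfl hpos, Finset.sum_mul]
  have tel : ∀ j ∈ Finset.range m, Real.sin (t + j * π / m) * Real.sin (π / (2 * m)) =
      (-Real.cos (t + (j + 1 : ℕ) * π / m - π / (2 * m)) / 2) -
      (-Real.cos (t + (j : ℕ) * π / m - π / (2 * m)) / 2) := by
    intro j _
    have e1 : t + (j + 1 : ℕ) * π / m - π / (2 * m) = (t + j * π / m) + π / (2 * m) := by
      push_cast; field_simp; ring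
    rw [e1, Real.cos_add, Real.cos_sub]; ring
  rw [Finset.sum_congr rfl tel,
    Finset.sum_range_sub (fun j : ℕ => -Real.cos (t + (j : ℕ) * π / m - π / (2 * m)) / 2)]
  have c1 := Real.neg_one_le_cos (t + (m : ℕ) * π / m - π / (2 * m))
  have c2 := Real.cos_le_one (t + (0 : ℕ) * π / m - π / (2 * m))
  linarith

lemma ratio_arith {S L s n : ℝ} (hs : 0 < s) (hn : 0 < n) (hL : 0 < L)
    (h : S / (2 * L) ≤ 1 / s / (2 * n)) : S * (n * s) ≤ L := by
  rw [div_div, div_le_div_iff₀ (mul_pos two_pos hL) (mul_pos hs (mul_pos two_pos hn))] at h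
  linarith

/-- The explicit competitor. -/
def comp (m p : ℕ) : Fin m → E2 := fun j => ((-1 : ℝ) ^ ((j : ℕ) / p)) • harmonicFrame m j

lemma inner2 (x y : E2) : ⟪x, y⟫ = x 0 * y 0 + x 1 * y 1 := by
  simp [PiLp.inner_apply, Fin.sum_univ_two]; ring

lemma norm2 (x : E2) : ‖x‖ ^ 2 = x 0 ^ 2 + x 1 ^ 2 := by
  rw [EuclideanSpace.real_norm_sq_eq, Fin.sum_univ_two]

lemma vec2_zero (x y : ℝ) : vec2 x y 0 = x := rfl
lemma vec2_one (x y : ℝ) : vec2 x y 1 = y := rfl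

lemma ext2 {x y : E2} (h0 : x 0 = y 0) (h1 : x 1 = y 1) : x = y := by
  ext i; fin_cases i <;> assumption

lemma norm_harm (m : ℕ) (j : Fin m) : ‖harmonicFrame m j‖ = 1 := by
  have h : ‖harmonicFrame m j‖ ^ 2 = 1 := by
    rw [norm2]; simp only [harmonicFrame, vec2_zero, vec2_one]
    rw [add_comm]; exact Real.sin_sq_add_cos_sq _
  nlinarith [norm_nonneg (harmonicFrame m j)]

lemma norm_comp (m p : ℕ) (j : Fin m) : ‖comp m p j‖ = 1 := by
  simp [comp, norm_smul, norm_harm]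

lemma csum_zero (k p : ℕ) (hk : Odd k) (hk1 : 1 < k) (hp : 0 < p) :
    ∑ j ∈ Finset.range (k * p), ((-1 : ℂ) ^ (j / p)) *
      Complex.exp (((j * π / ((k * p : ℕ) : ℝ) : ℝ) : ℂ) * Complex.I) = 0 := by
  have hk0 : (k : ℂ) ≠ 0 := by exact_mod_cast (by omega : k ≠ 0)
  have hp0 : (p : ℂ) ≠ 0 := by exact_mod_cast (by omega : p ≠ 0)
  have hkR : (1 : ℝ) < k := by exact_mod_cast hk1
  set ζ : ℂ := -Complex.exp (((π / k : ℝ) : ℂ) * Complex.I) with hζ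
  have hζk : ζ ^ k = 1 := by
    have e1 : (k : ℂ) * (((π / k : ℝ) : ℂ) * Complex.I) = π * Complex.I := by
      push_cast; field_simp
    rw [hζ, hk.neg_pow, ← Complex.exp_nat_mul, e1, Complex.exp_pi_mul_I, neg_neg]
  have hζ1 : ζ ≠ 1 := by
    intro h
    have h2 := congrArg Complex.im h
    rw [hζ, Complex.neg_im, Complex.exp_ofReal_mul_I_im, Complex.one_im] at h2
    have h3 : 0 < Real.sin (π / k) := by
      apply Real.sin_pos_of_pos_of_lt_pi (by positivity)
      rw [div_lt_iff₀ (by positivity)]; nlinarith [Real.pi_pos]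
    linarith
  have hgeom : ∑ b ∈ Finset.range k, ζ ^ b = 0 := by
    have := geom_sum_mul ζ k
    rw [hζk, sub_self] at this
    exact (mul_eq_zero.1 this).resolve_right (sub_ne_zero.2 hζ1)
  rw [Finset.sum_range, ← finProdFinEquiv.sum_comp, Fintype.sum_prod_type_right]
  apply Finset.sum_eq_zero
  intro c _
  have hterm : ∀ b : Fin k, ((-1 : ℂ) ^ ((finProdFinEquiv (b, c) : ℕ) / p)) *
      Complex.exp ((((finProdFinEquiv (b, c) : ℕ) * π / ((k * p : ℕ) : ℝ) : ℝ) : ℂ) * Complex.I)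
      = Complex.exp (((c : ℕ) * π / (k * p) : ℂ) * Complex.I) * ζ ^ (b : ℕ) := by
    intro b
    have hv : (finProdFinEquiv (b, c) : ℕ) = c + p * b := rfl
    rw [hv, Nat.add_mul_div_left _ _ hp, Nat.div_eq_of_lt c.2, zero_add, hζ, neg_pow (Complex.exp _),
      ← Complex.exp_nat_mul, mul_left_comm, ← Complex.exp_add]
    congr 2
    push_cast
    field_simp
    try ring
  rw [Finset.sum_congr rfl fun b _ => hterm b, ← Finset.mul_sum,
    ← Finset.sum_range (fun b => ζ ^ b), hgeom, mul_zero]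

lemma comp_edge {m k p : ℕ} (hk : Odd k) (hk1 : 1 < k) (hp : 0 < p) (hmkp : m = k * p) :
    IsEdgeFamily (comp m p) := by
  have hm : 0 < m := by subst hmkp; positivity
  have hm0 : (0 : ℝ) < m := by exact_mod_cast hm
  refine ⟨fun j h => ?_, ?_, ?_⟩
  · have := norm_comp m p j
    rw [h] at this; simp at this
  · intro i j hij h
    rw [norm_comp, norm_comp] at h
    simp only [inv_one, one_smul] at h
    have h0 := congrArg (fun v : E2 => v 0) h
    have h1 := congrArg (fun v : E2 => v 1) h
    simp only [comp, harmonicFrame, PiLp.smul_apply, vec2_zero, vec2_one, smul_eq_mul] at h0 h1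
    have hi2 : ((-1 : ℝ) ^ ((i : ℕ) / p)) ≠ 0 := by simp
    have hsin : Real.sin ((i : ℕ) * π / m - (j : ℕ) * π / m) = 0 := by
      rw [Real.sin_sub]
      apply mul_left_cancel₀ hi2
      apply mul_left_cancel₀ (show ((-1 : ℝ) ^ ((j : ℕ) / p)) ≠ 0 by simp)
      linear_combination (((-1 : ℝ) ^ ((j : ℕ) / p)) * Real.cos ((j : ℕ) * π / m)) * h1
        - (((-1 : ℝ) ^ ((j : ℕ) / p)) * Real.sin ((j : ℕ) * π / m)) * h0
    have hi : ((i : ℕ) : ℝ) < m := by exact_mod_cast i.2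
    have hj : ((j : ℕ) : ℝ) < m := by exact_mod_cast j.2
    have hi0 : (0:ℝ) ≤ ((i : ℕ) : ℝ) := Nat.cast_nonneg _
    have hj0 : (0:ℝ) ≤ ((j : ℕ) : ℝ) := Nat.cast_nonneg _
    have e : (i : ℕ) * π / m - (j : ℕ) * π / m = ((i : ℕ) - (j : ℕ)) * π / m := by ring
    rw [e] at hsin
    have := (Real.sin_eq_zero_iff_of_lt_of_lt (by
      rw [lt_div_iff₀ hm0]; nlinarith [Real.pi_pos]) (by
      rw [div_lt_iff₀ hm0]; nlinarith [Real.pi_pos])).1 hsin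
    have h3 : ((i : ℕ) : ℝ) - (j : ℕ) = 0 := by
      have hpi := Real.pi_pos.ne'
      field_simp at this
      simpa [hpi] using this
    apply hij
    apply Fin.ext
    exact_mod_cast sub_eq_zero.1 h3
  · have hc := csum_zero k p hk hk1 hp
    rw [← hmkp, Finset.sum_range] at hc
    have hterm : ∀ j : Fin m, ((-1 : ℂ) ^ ((j:ℕ) / p)) *
      Complex.exp ((((j:ℕ) * π / (m : ℝ) : ℝ) : ℂ) * Complex.I) =
        ⟨comp m p j 0, comp m p j 1⟩ := by
      intro j
      have hs : ((-1 : ℂ) ^ ((j:ℕ) / p)) = (((-1 : ℝ) ^ ((j:ℕ) / p) : ℝ) : ℂ) := by push_cast; rfl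
      rw [hs]
      apply Complex.ext
      · rw [Complex.re_ofReal_mul, Complex.exp_ofReal_mul_I_re]
        simp [comp, harmonicFrame, vec2_zero]
      · rw [Complex.im_ofReal_mul, Complex.exp_ofReal_mul_I_im]
        simp [comp, harmonicFrame, vec2_one]
    rw [Finset.sum_congr rfl fun j _ => hterm j] at hc
    have hr := congrArg Complex.re hc
    have hi := congrArg Complex.im hc
    rw [Complex.re_sum] at hr
    rw [Complex.im_sum] at hi
    apply ext2
    · simpa using hr
    · simpa using hi

lemma exists_angle (u : E2) (hu : ‖u‖ = 1) : ∃ t, u 0 = Real.cos t ∧ u 1 = Real.sin t := by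
  have h := norm2 u
  rw [hu] at h
  have hz : ‖(⟨u 0, u 1⟩ : ℂ)‖ = 1 := by
    rw [Complex.norm_def, Complex.normSq_mk, Real.sqrt_eq_one]; linarith
  refine ⟨Complex.arg ⟨u 0, u 1⟩, ?_, ?_⟩
  · have := Complex.norm_mul_cos_arg ⟨u 0, u 1⟩
    rw [hz] at this; simpa using this.symm
  · have := Complex.norm_mul_sin_arg ⟨u 0, u 1⟩
    rw [hz] at this; simpa using this.symm

lemma comp_ratio {m p : ℕ} (hm : 0 < m) :
    rRatio (comp m p) ≤ 1 / Real.sin (π / (2 * m)) / (2 * m) := by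
  have hm0 : (0 : ℝ) < m := by exact_mod_cast hm
  have hm1 : (1 : ℝ) ≤ m := by exact_mod_cast hm
  have hs : 0 < Real.sin (π / (2 * m)) := by
    apply Real.sin_pos_of_pos_of_lt_pi (by positivity)
    rw [div_lt_iff₀ (by positivity)]; nlinarith [Real.pi_pos]
  unfold rRatio
  simp only [norm_comp, Finset.sum_const, Finset.card_univ, Fintype.card_fin, nsmul_eq_mul, mul_one]
  gcongr
  apply csSup_le
  · exact ⟨_, vec2 1 0, by
      have := norm2 (vec2 1 0)
      rw [vec2_zero, vec2_one] at this
      nlinarith [norm_nonneg (vec2 1 0)], rfl⟩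
  · rintro s ⟨u, hu, rfl⟩
    rw [le_div_iff₀ hs]
    obtain ⟨t, h0, h1⟩ := exists_angle u hu
    have := sum_abs_sin_le hm (π / 2 - t)
    rw [Finset.sum_range] at this
    refine le_trans (le_of_eq ?_) this
    congr 1
    refine Finset.sum_congr rfl fun j _ => ?_
    rw [comp, real_inner_smul_left, abs_mul, abs_pow, abs_neg, abs_one, one_pow, one_mul, inner2,
      h0, h1]
    simp only [harmonicFrame, vec2_zero, vec2_one]
    have : π / 2 - t + (j : ℕ) * π / m = (j : ℕ) * π / m - t + π / 2 := by ring
    rw [this, Real.sin_add_pi_div_two, Real.cos_sub]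

/-- Let `m ≥ 3` have an odd factor and let `e` be an optimal edge family.
If `α_i ∈ [0,2π)` is the counterclockwise angle from `e_1` to `e_i` (i.e. the direction of
`e_i` is that of `e_1` rotated by `α_i`) and `ψ_i ∈ (0,π]` with `ψ_i ≡ α_i (mod π)`, then
`{ψ_1,…,ψ_m} = {jπ/m : j = 1,…,m}`. -/
theorem stmt18 {m : ℕ} (hm : 3 ≤ m) (hodd : ∃ k, Odd k ∧ 1 < k ∧ k ∣ m)
    (e : Fin m → E2) (hopt : IsOptimalEdgeFamily e)
    (α ψ : Fin m → ℝ)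
    (hα : ∀ i, 0 ≤ α i ∧ α i < 2 * π)
    (hangle : ∀ i, ‖e ⟨0, by omega⟩‖ • e i = ‖e i‖ • rot (α i) (e ⟨0, by omega⟩))
    (hψ : ∀ i, 0 < ψ i ∧ ψ i ≤ π ∧ ∃ k : ℤ, ψ i - α i = k * π) :
    Set.range ψ = Set.range (fun j : Fin m => ((j : ℕ) + 1) * π / m) := by
  obtain ⟨k, hk, hk1, p, hp⟩ := hodd
  have hm' : 0 < m := by omega
  have hm0 : (0 : ℝ) < m := by exact_mod_cast hm'
  have hp0 : 0 < p := by
    rcases Nat.eq_zero_or_pos p with h | h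
    · subst h; omega
    · exact h
  have hs : 0 < Real.sin (π / (2 * m)) := by
    have hm1 : (1 : ℝ) ≤ m := by exact_mod_cast hm'
    apply Real.sin_pos_of_pos_of_lt_pi (by positivity)
    rw [div_lt_iff₀ (by positivity)]; nlinarith [Real.pi_pos]
  obtain ⟨hedge, hmin⟩ := hopt
  have hr := (hmin _ (comp_edge hk hk1 hp0 hp)).trans (comp_ratio hm')
  set z : Fin m := ⟨0, by omega⟩ with hz
  have hn : 0 < ‖e z‖ := norm_pos_iff.2 (hedge.1 z)
  have hn2 := norm2 (e z)
  have hbdd : BddAbove {s | ∃ u : E2, ‖u‖ = 1 ∧ s = ∑ j, |⟪e j, u⟫|} := by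
    refine ⟨∑ j, ‖e j‖, ?_⟩
    rintro s ⟨u, hu, rfl⟩
    refine Finset.sum_le_sum fun j _ => ?_
    have := abs_real_inner_le_norm (e j) u
    rwa [hu, mul_one] at this
  have hLpos : 0 < ∑ j, ‖e j‖ :=
    Finset.sum_pos (fun j _ => norm_pos_iff.2 (hedge.1 j)) ⟨z, Finset.mem_univ _⟩
  refine spacing hm' (fun j => ‖e j‖) ψ (fun j => norm_pos_iff.2 (hedge.1 j))
    (fun j => ⟨(hψ j).1, (hψ j).2.1⟩) ⟨z, ?_⟩
    (sSup {s | ∃ u : E2, ‖u‖ = 1 ∧ s = ∑ j, |⟪e j, u⟫|}) ?_ ?_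
  · have h := hangle z
    have h' := smul_right_injective E2 hn.ne' h
    have h0 := congrArg (fun v : E2 => v 0) h'
    have h1 := congrArg (fun v : E2 => v 1) h'
    simp only [rot, vec2_zero, vec2_one] at h0 h1
    change e z 0 = Real.cos (α z) * e z 0 - Real.sin (α z) * e z 1 at h0
    change e z 1 = Real.sin (α z) * e z 0 + Real.cos (α z) * e z 1 at h1
    have hsin : Real.sin (α z) = 0 := by
      apply mul_left_cancel₀ (pow_pos hn 2).ne'
      rw [hn2]; linear_combination e z 1 * h0 - e z 0 * h1
    obtain ⟨q, hq⟩ := Real.sin_eq_zero_iff.1 hsin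
    obtain ⟨r1, r2, c, hc⟩ := hψ z
    have e1 : ψ z = ((c + q : ℤ) : ℝ) * π := by push_cast; linarith
    have l1 : 0 < c + q := by
      by_contra hcon
      have : ((c + q : ℤ) : ℝ) ≤ 0 := by exact_mod_cast not_lt.1 hcon
      nlinarith [Real.pi_pos]
    have l2 : c + q ≤ 1 := by
      by_contra hcon
      have : (2 : ℝ) ≤ ((c + q : ℤ) : ℝ) := by exact_mod_cast (by omega : (2:ℤ) ≤ c + q)
      nlinarith [Real.pi_pos]
    have l3 : c + q = 1 := by omega
    rw [e1, l3]; simp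
  · intro θ
    apply le_csSup hbdd
    refine ⟨‖e z‖⁻¹ • rot (θ + π / 2) (e z), ?_, ?_⟩
    · rw [norm_smul, norm_inv, norm_norm]
      have h2 : ‖rot (θ + π / 2) (e z)‖ ^ 2 = ‖e z‖ ^ 2 := by
        rw [norm2, hn2]
        simp only [rot, vec2_zero, vec2_one]
        change (Real.cos (θ + π / 2) * e z 0 - Real.sin (θ + π / 2) * e z 1) ^ 2 +
          (Real.sin (θ + π / 2) * e z 0 + Real.cos (θ + π / 2) * e z 1) ^ 2 = _
        linear_combination (e z 0 ^ 2 + e z 1 ^ 2) * Real.sin_sq_add_cos_sq (θ + π / 2)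
      have h3 := (sq_eq_sq₀ (norm_nonneg _) (norm_nonneg _)).1 h2
      rw [h3, inv_mul_cancel₀ hn.ne']
    · refine Finset.sum_congr rfl fun j _ => ?_
      have hj : e j = (‖e z‖⁻¹ * ‖e j‖) • rot (α j) (e z) := by
        rw [mul_smul, ← hangle j, smul_smul, inv_mul_cancel₀ hn.ne', one_smul]
      obtain ⟨-, -, c, hc⟩ := hψ j
      have hψα : ψ j = α j + c * π := by linarith
      have hin : ⟪e j, ‖e z‖⁻¹ • rot (θ + π / 2) (e z)⟫ = - (‖e j‖ * Real.sin (θ - α j)) := by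
        have hrr : ⟪rot (α j) (e z), rot (θ + π / 2) (e z)⟫
            = - (‖e z‖ ^ 2 * Real.sin (θ - α j)) := by
          rw [inner2, hn2]
          simp only [rot, vec2_zero, vec2_one, Real.sin_add_pi_div_two, Real.cos_add_pi_div_two,
            Real.sin_sub]
          change (Real.cos (α j) * e z 0 - Real.sin (α j) * e z 1) *
            (-Real.sin θ * e z 0 - Real.cos θ * e z 1) +
            (Real.sin (α j) * e z 0 + Real.cos (α j) * e z 1) *
            (Real.cos θ * e z 0 + -Real.sin θ * e z 1) = _
          ring
        conv_lhs => rw [hj]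
        rw [real_inner_smul_left, real_inner_smul_right, hrr]
        field_simp
      rw [hin, abs_neg, abs_mul, abs_of_pos (norm_pos_iff.2 (hedge.1 j)), hψα,
        ← sub_sub, Real.sin_sub_int_mul_pi, abs_mul]
      simp
  · unfold rRatio at hr
    exact ratio_arith hs hm0 hLpos hr
end
end

section
/- For every integer m ≥ 2 and every matrix A = [a_1,…,a_m]ᵀ ∈ ℝ^{m×2}, the optimal lower Lipschitz constant satisfies L_A² ≤ (1/2)·∑_{j=1}^m ‖a_j‖₂² − (1/(2m·sin(π/(2m))))·∑_{j=1}^m ‖a_j‖₂². -/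
noncomputable section

open Real
open scoped RealInnerProductSpace ENNReal

/-- Telescoping bound. -/
lemma aux_cos (ψ : ℕ → ℝ) (m j : ℕ) (hj : j < m) (hend : ψ m = ψ 0 + π) :
    2 ≤ ∑ k ∈ Finset.range m, |cos (ψ j - ψ (k + 1)) - cos (ψ j - ψ k)| := by
  have h1 : cos (ψ j - ψ j) - cos (ψ j - ψ 0) ≤
      ∑ k ∈ Finset.range j, |cos (ψ j - ψ (k + 1)) - cos (ψ j - ψ k)| := by
    rw [← Finset.sum_range_sub (fun k => cos (ψ j - ψ k)) j]
    exact Finset.sum_le_sum fun k _ => le_abs_self _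
  have h2 : -(cos (ψ j - ψ m) - cos (ψ j - ψ j)) ≤
      ∑ k ∈ Finset.Ico j m, |cos (ψ j - ψ (k + 1)) - cos (ψ j - ψ k)| := by
    rw [← Finset.sum_Ico_sub (fun k => cos (ψ j - ψ k)) hj.le, ← Finset.sum_neg_distrib]
    exact Finset.sum_le_sum fun k _ => neg_le_abs _
  rw [← Finset.sum_range_add_sum_Ico _ hj.le]
  have h3 : cos (ψ j - ψ m) = - cos (ψ j - ψ 0) := by
    rw [hend, ← cos_sub_pi]; congr 1; ring
  rw [h3] at h2
  simp only [sub_self, cos_zero] at h1 h2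
  linarith

/-- Jensen for the sine. -/
lemma aux_jensen (ψ : ℕ → ℝ) (m : ℕ) (hm : 0 < m) (hmono : ∀ k < m, ψ k ≤ ψ (k + 1))
    (hend : ψ m = ψ 0 + π) :
    (∀ k < m, 0 ≤ sin ((ψ (k + 1) - ψ k) / 2)) ∧
    ∑ k ∈ Finset.range m, sin ((ψ (k + 1) - ψ k) / 2) ≤ m * sin (π / (2 * m)) := by
  have hsum : ∑ k ∈ Finset.range m, (ψ (k + 1) - ψ k) = π := by
    rw [Finset.sum_range_sub, hend]; ring
  have hle : ∀ k < m, ψ (k + 1) - ψ k ≤ π := by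
    intro k hk
    rw [← hsum]
    exact Finset.single_le_sum (f := fun k => ψ (k + 1) - ψ k)
      (fun i hi => sub_nonneg.2 (hmono i (Finset.mem_range.1 hi))) (Finset.mem_range.2 hk)
  have hmem : ∀ k < m, (ψ (k + 1) - ψ k) / 2 ∈ Set.Icc 0 π := by
    intro k hk
    have := hmono k hk
    have := hle k hk
    constructor <;> linarith [pi_pos]
  have hm' : (0 : ℝ) < m := by exact_mod_cast hm
  refine ⟨fun k hk => sin_nonneg_of_mem_Icc (hmem k hk), ?_⟩
  have := strictConcaveOn_sin_Icc.concaveOn.le_map_sum (t := Finset.range m)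
    (w := fun _ => (1 : ℝ) / m) (p := fun k => (ψ (k + 1) - ψ k) / 2)
    (fun _ _ => by positivity) (by simp [hm'.ne'])
    (fun k hk => hmem k (Finset.mem_range.1 hk))
  simp only [smul_eq_mul, ← Finset.mul_sum, ← Finset.sum_div] at this
  rw [hsum] at this
  have e : 1 / (m : ℝ) * (π / 2) = π / (2 * m) := by field_simp
  rw [e, one_div, inv_mul_le_iff₀ hm'] at this
  exact this

lemma aux_sorted {m : ℕ} (hm : 0 < m) (φ w : Fin m → ℝ) (hφ : Monotone φ)
    (h0 : ∀ j, φ j ∈ Set.Ico 0 π) (hw : ∀ j, 0 ≤ w j) (H : ℝ)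
    (hH : ∀ β, ∑ j, w j * |sin (φ j - β)| ≤ H) :
    ∑ j, w j ≤ H * (m * sin (π / (2 * m))) := by
  have hH0 : 0 ≤ H := le_trans (Finset.sum_nonneg fun j _ =>
    mul_nonneg (hw j) (abs_nonneg _)) (hH 0)
  let ψ : ℕ → ℝ := fun k => if h : k < m then φ ⟨k, h⟩ else φ ⟨0, hm⟩ + π
  have hψ : ∀ j : Fin m, ψ j = φ j := fun j => by simp [ψ]
  have hend : ψ m = ψ 0 + π := by simp [ψ, hm]
  have hmono : ∀ k < m, ψ k ≤ ψ (k + 1) := by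
    intro k hk
    by_cases h : k + 1 < m
    · simp only [ψ, hk, h, dif_pos]
      exact hφ (by simp)
    · simp only [ψ, hk, h, dif_pos, dif_neg, not_false_eq_true]
      have := (h0 ⟨k, hk⟩).2
      have := (h0 ⟨0, hm⟩).1
      linarith
  obtain ⟨hs0, hs⟩ := aux_jensen ψ m hm hmono hend
  have key : ∀ j k, k < m → |cos (ψ j - ψ (k + 1)) - cos (ψ j - ψ k)| =
      2 * sin ((ψ (k + 1) - ψ k) / 2) * |sin (ψ j - (ψ (k + 1) + ψ k) / 2)| := by
    intro j k hk
    have e : cos (ψ j - ψ (k + 1)) - cos (ψ j - ψ k) =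
        2 * sin ((ψ (k + 1) - ψ k) / 2) * sin (ψ j - (ψ (k + 1) + ψ k) / 2) := by
      have e1 : ψ j - ψ (k + 1) =
        (ψ j - (ψ (k + 1) + ψ k) / 2) - (ψ (k + 1) - ψ k) / 2 := by ring
      have e2 : ψ j - ψ k =
        (ψ j - (ψ (k + 1) + ψ k) / 2) + (ψ (k + 1) - ψ k) / 2 := by ring
      rw [e1, e2, cos_sub, cos_add]
      ring_nf
    rw [e, abs_mul, abs_of_nonneg (mul_nonneg zero_le_two (hs0 k hk))]
  have h1 : ∑ j, w j * 2 ≤ ∑ j : Fin m, w j * ∑ k ∈ Finset.range m,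
      2 * sin ((ψ (k + 1) - ψ k) / 2) * |sin (ψ j - (ψ (k + 1) + ψ k) / 2)| := by
    refine Finset.sum_le_sum fun j _ => mul_le_mul_of_nonneg_left ?_ (hw j)
    rw [← Finset.sum_congr rfl fun k hk => key j k (Finset.mem_range.1 hk)]
    exact aux_cos ψ m j j.2 hend
  have h2 : ∑ j : Fin m, w j * ∑ k ∈ Finset.range m,
      2 * sin ((ψ (k + 1) - ψ k) / 2) * |sin (ψ j - (ψ (k + 1) + ψ k) / 2)| =
      ∑ k ∈ Finset.range m, 2 * sin ((ψ (k + 1) - ψ k) / 2) *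
        ∑ j : Fin m, w j * |sin (φ j - (ψ (k + 1) + ψ k) / 2)| := by
    simp only [Finset.mul_sum]
    rw [Finset.sum_comm]
    refine Finset.sum_congr rfl fun k _ => Finset.sum_congr rfl fun j _ => ?_
    rw [hψ]; ring
  have h3 : ∑ k ∈ Finset.range m, 2 * sin ((ψ (k + 1) - ψ k) / 2) *
        ∑ j : Fin m, w j * |sin (φ j - (ψ (k + 1) + ψ k) / 2)| ≤
      ∑ k ∈ Finset.range m, 2 * sin ((ψ (k + 1) - ψ k) / 2) * H :=
    Finset.sum_le_sum fun k hk => mul_le_mul_of_nonneg_left (hH _)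
      (mul_nonneg zero_le_two (hs0 k (Finset.mem_range.1 hk)))
  rw [← Finset.sum_mul, ← Finset.mul_sum] at h3
  rw [← Finset.sum_mul] at h1
  have h4 := mul_le_mul_of_nonneg_right hs hH0
  linarith

lemma aux_abs_sin (x β : ℝ) :
    |sin (toIcoMod pi_pos 0 x - β)| = |sin (x - β)| := by
  rw [toIcoMod, zsmul_eq_mul]
  rw [show x - (toIcoDiv pi_pos 0 x : ℝ) * π - β = (x - β) - (toIcoDiv pi_pos 0 x : ℝ) * π by ring,
    sin_sub_int_mul_pi]
  rcases Int.even_or_odd (toIcoDiv pi_pos 0 x) with h | h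
  · simp [h.neg_one_zpow]
  · simp [h.neg_one_zpow]

lemma aux_general {m : ℕ} (hm : 0 < m) (φ w : Fin m → ℝ) (hw : ∀ j, 0 ≤ w j) (H : ℝ)
    (hH : ∀ β, ∑ j, w j * |sin (φ j - β)| ≤ H) :
    ∑ j, w j ≤ H * (m * sin (π / (2 * m))) := by
  let f : Fin m → ℝ := fun j => toIcoMod pi_pos 0 (φ j)
  let σ := Tuple.sort f
  rw [← Equiv.sum_comp σ w]
  refine aux_sorted hm (f ∘ σ) (fun j => w (σ j)) (Tuple.monotone_sort f) ?_ (fun j => hw _) H ?_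
  · intro j
    simpa [f] using toIcoMod_mem_Ico pi_pos 0 (φ (σ j))
  · intro β
    refine le_trans (le_of_eq ?_) (hH β)
    rw [← Equiv.sum_comp σ (fun j => w j * |sin (φ j - β)|)]
    refine Finset.sum_congr rfl fun j _ => ?_
    simp only [f, Function.comp, aux_abs_sin]

lemma aux_polar (v : E2) : ∃ t : ℝ, v 0 = ‖v‖ * cos t ∧ v 1 = ‖v‖ * sin t := by
  have hn : ‖(⟨v 0, v 1⟩ : ℂ)‖ = ‖v‖ := by
    rw [EuclideanSpace.norm_eq, Complex.norm_def, Complex.normSq_mk]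
    simp [Fin.sum_univ_two, sq]
  refine ⟨Complex.arg ⟨v 0, v 1⟩, ?_, ?_⟩
  · rw [← hn, Complex.norm_mul_cos_arg]
  · rw [← hn, Complex.norm_mul_sin_arg]

lemma aux_pdist (α : ℝ) : pdist (vec2 (cos α) (sin α)) (vec2 (-sin α) (cos α)) = √2 := by
  have h := sin_sq_add_cos_sq α
  have e1 : ‖vec2 (cos α) (sin α) - vec2 (-sin α) (cos α)‖ = √2 := by
    rw [EuclideanSpace.norm_eq]
    congr 1
    simp [vec2, Fin.sum_univ_two]
    nlinarith
  have e2 : ‖vec2 (cos α) (sin α) + vec2 (-sin α) (cos α)‖ = √2 := by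
    rw [EuclideanSpace.norm_eq]
    congr 1
    simp [vec2, Fin.sum_univ_two]
    nlinarith
  rw [pdist, e1, e2, min_self]

lemma aux_phi {m : ℕ} (a : Fin m → E2) (t : Fin m → ℝ)
    (ht : ∀ j, a j 0 = ‖a j‖ * cos (t j) ∧ a j 1 = ‖a j‖ * sin (t j)) (α : ℝ) :
    ‖PhiMap a (vec2 (cos α) (sin α)) - PhiMap a (vec2 (-sin α) (cos α))‖ ^ 2 =
      ∑ j, ‖a j‖ ^ 2 - ∑ j, ‖a j‖ ^ 2 * |sin (2 * t j - 2 * α)| := by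
  rw [EuclideanSpace.norm_sq_eq, ← Finset.sum_sub_distrib]
  refine Finset.sum_congr rfl fun j _ => ?_
  have e1 : ⟪a j, vec2 (cos α) (sin α)⟫ = ‖a j‖ * cos (t j - α) := by
    rw [PiLp.inner_apply, Fin.sum_univ_two, (ht j).1, (ht j).2, cos_sub]
    simp [vec2]; ring
  have e2 : ⟪a j, vec2 (-sin α) (cos α)⟫ = ‖a j‖ * sin (t j - α) := by
    rw [PiLp.inner_apply, Fin.sum_univ_two, (ht j).1, (ht j).2, sin_sub]
    simp [vec2]; ring
  have e3 : (PhiMap a (vec2 (cos α) (sin α)) - PhiMap a (vec2 (-sin α) (cos α))) j =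
      ‖a j‖ * |cos (t j - α)| - ‖a j‖ * |sin (t j - α)| := by
    have : (PhiMap a (vec2 (cos α) (sin α)) - PhiMap a (vec2 (-sin α) (cos α))) j =
      |⟪a j, vec2 (cos α) (sin α)⟫| - |⟪a j, vec2 (-sin α) (cos α)⟫| := rfl
    rw [this, e1, e2, abs_mul, abs_mul, abs_norm]
  rw [e3, norm_eq_abs, sq_abs, ← mul_sub 2 (t j) α, sin_two_mul, abs_mul, abs_mul,
    abs_of_pos (zero_lt_two' ℝ)]
  have h := sin_sq_add_cos_sq (t j - α)
  rw [← sq_abs (sin _), ← sq_abs (cos _)] at h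
  linear_combination ‖a j‖ ^ 2 * h

lemma aux_L {m : ℕ} (a : Fin m → E2) (t : Fin m → ℝ)
    (ht : ∀ j, a j 0 = ‖a j‖ * cos (t j) ∧ a j 1 = ‖a j‖ * sin (t j)) (β : ℝ) :
    ∑ j, ‖a j‖ ^ 2 * |sin (2 * t j - β)| ≤ ∑ j, ‖a j‖ ^ 2 - 2 * lipL a ^ 2 := by
  have hp := aux_pdist (β / 2)
  have hphi := aux_phi a t ht (β / 2)
  rw [mul_div_cancel₀ β two_ne_zero] at hphi
  have hnn : ∀ r ∈ ratioSet a, 0 ≤ r := by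
    rintro r ⟨x, y, -, rfl⟩
    exact div_nonneg (norm_nonneg _) (le_min (norm_nonneg _) (norm_nonneg _))
  have h0 : 0 ≤ lipL a := Real.sInf_nonneg hnn
  have h1 : lipL a ≤ ‖PhiMap a (vec2 (cos (β / 2)) (sin (β / 2))) -
      PhiMap a (vec2 (-sin (β / 2)) (cos (β / 2)))‖ / √2 := by
    refine csInf_le ⟨0, hnn⟩ ⟨vec2 (cos (β / 2)) (sin (β / 2)),
      vec2 (-sin (β / 2)) (cos (β / 2)), ?_, ?_⟩
    · rw [hp]; positivity
    · rw [hp]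
  have h2 := pow_le_pow_left₀ h0 h1 2
  rw [div_pow, hphi, sq_sqrt zero_le_two] at h2
  linarith

/-- For every `m ≥ 2` and every `A = [a_1,…,a_m]ᵀ ∈ ℝ^{m×2}`, the optimal
lower Lipschitz constant satisfies
`L_A² ≤ (1/2)·∑ ‖a_j‖² − (1/(2m·sin(π/(2m))))·∑ ‖a_j‖²`. -/
theorem stmt19 {m : ℕ} (hm : 2 ≤ m) (a : Fin m → E2) :
    lipL a ^ 2 ≤
      (1 / 2) * ∑ j, ‖a j‖ ^ 2 -
        (1 / (2 * m * Real.sin (π / (2 * m)))) * ∑ j, ‖a j‖ ^ 2 := by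
  choose t ht using fun j => aux_polar (a j)
  have hm0 : 0 < m := by omega
  have h := aux_general hm0 (fun j => 2 * t j) (fun j => ‖a j‖ ^ 2) (fun j => by positivity)
    _ (aux_L a t ht)
  have hm' : (2 : ℝ) ≤ m := by exact_mod_cast hm
  have hs : 0 < sin (π / (2 * m)) := by
    apply sin_pos_of_pos_of_lt_pi
    · have := pi_pos
      positivity
    · apply div_lt_self pi_pos
      linarith
  have hD : 0 < m * sin (π / (2 * m)) := by positivity
  rw [← div_le_iff₀ hD] at h
  have e : 1 / (2 * m * sin (π / (2 * m))) * ∑ j, ‖a j‖ ^ 2 =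
      1 / 2 * ((∑ j, ‖a j‖ ^ 2) / (m * sin (π / (2 * m)))) := by
    field_simp
  rw [e]
  linarith
end
end
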